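/- arXiv:math/0510247 — 2 statements merged into one kernel-verified Lean document; each statement's English description precedes it below -/
import Mathlib

section
/- A commutative Noetherian local ring R with residue field k is Gorenstein in the sense that Ext^*_R(k,R) is concentrated in one degree where it equals k, if and only if R has finite injective dimension as a module over itself. -/
open CategoryTheory

universe u

/-!
Write `k` for the residue field of `R`. For a finite module `M`, the injective dimension is less
than `n` as soon as `Extⁱ(k, M) = 0` for all `i ≥ n`. Baer's criterion and dimension shifting reduce
this to `Extⁱ(R/I, M) = 0`, which is shown by Noetherian induction on `I`: for `x ∈ 𝔪 \ I` there is
an exact sequence `0 → R/(I : x) → R/I → R/(I + (x)) → 0` given by multiplication by `x`. Either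
`I : x` is strictly larger than `I`, or `x` acts surjectively on `Extⁱ(R/I, M)`, which is then zero
by Nakayama's lemma.

Conversely let `d` be the injective dimension of `R`, so that `Extᵈ(k, R) ≠ 0`, and let `t ≤ d` be
the least degree with `Extᵗ(k, R) ≠ 0`. By Rees's theorem there is a maximal regular sequence `rs`
of length `t` in `𝔪`, and maximality embeds `k` into `N = R/(rs)`. Since `Extᵈ⁺¹(-, R) = 0`, the map
`Extᵈ(N, R) → Extᵈ(k, R)` is surjective; as `N` has projective dimension `t`, this forces `d = t`.
The connecting maps of the regular sequence make `Extᵗ(N, R)` a quotient of `R`, hence so is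
`Extᵗ(k, R)`; being nonzero and killed by `𝔪`, it is `k`.
-/

universe v w

open Abelian IsLocalRing RingTheory.Sequence

section ContravariantExt

variable {C : Type v} [Category.{u} C] [Abelian C] [HasExt.{w} C] (B : C) {n : ℕ}

lemma subsingleton_ext_X₂ {S : ShortComplex C} (hS : S.ShortExact)
    (h₁ : Subsingleton (Ext S.X₁ B n)) (h₃ : Subsingleton (Ext S.X₃ B n)) :
    Subsingleton (Ext S.X₂ B n) := by
  refine subsingleton_of_forall_eq 0 fun e ↦ ?_
  obtain ⟨e, rfl⟩ := Ext.contravariant_sequence_exact₂ hS B e (h₁.elim _ _)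
  rw [h₃.elim e 0, Ext.comp_zero]

lemma precomp_mk₀_f_surjective {S : ShortComplex C} (hS : S.ShortExact)
    (h₃ : Subsingleton (Ext S.X₃ B (n + 1))) :
    Function.Surjective ((Ext.mk₀ S.f).precomp B (zero_add n)) := fun e ↦
  Ext.contravariant_sequence_exact₁ hS B e (add_comm 1 n) (h₃.elim _ _)

lemma precomp_mk₀_surjective_of_mono {X Y : C} (f : X ⟶ Y) [Mono f]
    [HasInjectiveDimensionLE B n] :
    Function.Surjective ((Ext.mk₀ f).precomp B (zero_add n)) :=
  precomp_mk₀_f_surjective B (S := .mk f _ (Limits.cokernel.condition f))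
    { exact := ShortComplex.exact_cokernel f }
    (HasInjectiveDimensionLT.subsingleton B (n + 1) _ le_rfl _)

lemma precomp_mk₀_surjective_of_iso {X Y : C} (e : X ≅ Y) :
    Function.Surjective ((Ext.mk₀ e.hom).precomp B (zero_add n)) := fun x ↦
  ⟨(Ext.mk₀ e.inv).comp x (zero_add n), by simp⟩

lemma subsingleton_ext_of_isZero {X : C} (hX : Limits.IsZero X) : Subsingleton (Ext X B n) :=
  have := hX.hasProjectiveDimensionLT_zero
  HasProjectiveDimensionLT.subsingleton X 0 n n.zero_le B

end ContravariantExt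

section InjectiveDimension

variable {R : Type u} [Ring R]

lemma shortExact_of_exact {M₁ M₂ M₃ : Type v} [AddCommGroup M₁] [Module R M₁] [AddCommGroup M₂]
    [Module R M₂] [AddCommGroup M₃] [Module R M₃] {f : M₁ →ₗ[R] M₂} {g : M₂ →ₗ[R] M₃}
    (hfg : Function.Exact f g) (hf : Function.Injective f) (hg : Function.Surjective g) :
    (ModuleCat.shortComplexOfCompEqZero f g hfg.linearMap_comp_eq_zero).ShortExact :=
  ModuleCat.shortComplex_shortExact _ hfg hf hg

lemma isZero_of_subsingleton_ext_zero (M : ModuleCat.{u} R)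
    (h : Subsingleton (Ext (ModuleCat.of R R) M 0)) : Limits.IsZero M := by
  have : Subsingleton (R →ₗ[R] M) :=
    (Ext.homEquiv₀.trans (ModuleCat.homEquiv (M := .of R R) (N := M))).subsingleton_congr.1 h
  have : Subsingleton M := (LinearMap.ringLmapEquivSelf R ℤ M).symm.subsingleton
  exact ModuleCat.isZero_of_subsingleton M

lemma injective_of_forall_subsingleton_ext_one (M : ModuleCat.{u} R)
    (h : ∀ I : Ideal R, Subsingleton (Ext (ModuleCat.of R (R ⧸ I)) M 1)) : Injective M := by
  rw [← Module.injective_iff_injective_object, ← Module.Baer.iff_injective]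
  intro I g
  obtain ⟨e, he⟩ := precomp_mk₀_f_surjective M (shortExact_of_exact
    (LinearMap.exact_subtype_mkQ I) I.injective_subtype I.mkQ_surjective) (h I)
    (Ext.mk₀ (ModuleCat.ofHom g))
  obtain ⟨φ, rfl⟩ := (Ext.mk₀_bijective _ _).surjective e
  have hφ : ModuleCat.ofHom I.subtype ≫ φ = ModuleCat.ofHom g :=
    (Ext.mk₀_bijective _ _).injective (by simpa using he)
  exact ⟨φ.hom, fun x hx ↦ LinearMap.congr_fun (ModuleCat.hom_ext_iff.1 hφ) ⟨x, hx⟩⟩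

theorem hasInjectiveDimensionLT_of_forall_ideal (M : ModuleCat.{u} R) (n : ℕ)
    (h : ∀ I : Ideal R, Subsingleton (Ext (ModuleCat.of R (R ⧸ I)) M n)) :
    HasInjectiveDimensionLT M n := by
  match n with
  | 0 =>
    let e := (Submodule.quotEquivOfEqBot (⊥ : Ideal R) rfl).symm.toModuleIso
    have := h ⊥
    exact (isZero_of_subsingleton_ext_zero M
      (precomp_mk₀_surjective_of_iso M e).subsingleton).hasInjectiveDimensionLT_zero
  | 1 =>
    exact injective_iff_hasInjectiveDimensionLT_one.1
      (injective_of_forall_subsingleton_ext_one M h)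
  | n + 2 =>
    let S := ShortComplex.mk _ _ (Limits.cokernel.condition (Injective.ι M))
    have hS : S.ShortExact := { exact := ShortComplex.exact_cokernel (Injective.ι M) }
    have : Injective S.X₂ := Injective.injective_under M
    refine (hS.hasInjectiveDimensionLT_X₃_iff n this).1 <|
      hasInjectiveDimensionLT_of_forall_ideal S.X₃ (n + 1) fun I ↦
        subsingleton_of_forall_eq 0 fun e ↦ ?_
    obtain ⟨e, rfl⟩ := Ext.covariant_sequence_exact₃ _ hS e rfl ((h I).elim _ _)
    rw [e.eq_zero_of_injective, Ext.zero_comp]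

end InjectiveDimension

section QuotientExactSequence

variable {R : Type u} [Ring R] {M N : Type v} [AddCommGroup M] [Module R M] [AddCommGroup N]
  [Module R N] (f : M →ₗ[R] N) {P : Submodule R N} {Q : Submodule R M}

lemma exact_mapQ_factor (hQ : Q ≤ P.comap f) :
    Function.Exact (Q.mapQ P f hQ)
      (Submodule.factor (le_sup_left : P ≤ P ⊔ LinearMap.range f)) := by
  simp [LinearMap.exact_iff, Submodule.factor, Submodule.ker_mapQ, Submodule.range_mapQ]

lemma shortExact_quotient_comap (hQ : Q = P.comap f) :
    (ModuleCat.shortComplexOfCompEqZero _ _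
      (exact_mapQ_factor f hQ.le).linearMap_comp_eq_zero).ShortExact :=
  shortExact_of_exact (exact_mapQ_factor f hQ.le)
    (by simp [← LinearMap.ker_eq_bot, Submodule.ker_mapQ, ← hQ])
    (Submodule.factor_surjective _)

end QuotientExactSequence

section Bass

variable {R : Type u} [CommRing R]

lemma mk₀_smul_id_comp {X M : ModuleCat.{u} R} {n : ℕ} (r : R) (e : Ext X M n) :
    (Ext.mk₀ (r • 𝟙 X)).comp e (zero_add n) = r • e := by
  simp [Ext.mk₀_smul]

lemma annihilator_le_annihilator_ext (X M : ModuleCat.{u} R) (n : ℕ) :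
    Module.annihilator R X ≤ Module.annihilator R (Ext X M n) := by
  refine fun r hr ↦ Module.mem_annihilator.2 fun e ↦ ?_
  have hrX : r • 𝟙 X = 0 := ModuleCat.hom_ext (LinearMap.ext (Module.mem_annihilator.1 hr))
  rw [← mk₀_smul_id_comp, hrX, Ext.mk₀_zero, Ext.zero_comp]

lemma nonempty_linearEquiv_quotient_of_surjective {I : Ideal R} (hI : I.IsMaximal) {E : Type*}
    [AddCommGroup E] [Module R E] [Nontrivial E] (hIE : I ≤ Module.annihilator R E)
    {φ : R →ₗ[R] E} (hφ : Function.Surjective φ) : Nonempty (E ≃ₗ[R] R ⧸ I) := by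
  have hle : I ≤ LinearMap.ker φ := fun r hr ↦ by
    rw [LinearMap.mem_ker, ← mul_one r, ← smul_eq_mul, map_smul,
      Module.mem_annihilator.1 (hIE hr)]
  have hne : LinearMap.ker φ ≠ ⊤ := fun htop ↦ by
    obtain ⟨e, he⟩ := exists_ne (0 : E)
    obtain ⟨r, rfl⟩ := hφ e
    exact he (LinearMap.mem_ker.1 (htop ▸ trivial))
  exact ⟨(φ.quotKerEquivOfSurjective hφ).symm ≪≫ₗ
    Submodule.quotEquivOfEq _ _ (hI.eq_of_le hne hle).symm⟩

variable [IsLocalRing R]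

variable (R) in
/-- The residue field of a local ring, as a module over that ring, encoded as the quotient by the
maximal ideal. -/
abbrev residueFieldModule : ModuleCat.{u} R :=
  ModuleCat.of R (R ⧸ maximalIdeal R)

lemma subsingleton_of_smul_surjective {E : Type*} [AddCommGroup E] [Module R E]
    [Module.Finite R E] {x : R} (hx : x ∈ maximalIdeal R)
    (hsurj : Function.Surjective fun e : E ↦ x • e) : Subsingleton E := by
  by_contra! hE
  refine Submodule.top_ne_pointwise_smul_of_mem_jacobson_annihilator (M := E)
    (maximalIdeal_le_jacobson _ hx) (eq_top_iff.2 fun e _ ↦ ?_).symm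
  obtain ⟨e, rfl⟩ := hsurj e
  exact Submodule.smul_mem_pointwise_smul e x ⊤ trivial

variable [IsNoetherianRing R] (M : ModuleCat.{u} R) [Module.Finite R M]

lemma subsingleton_ext_of_precomp_smul_surjective {X : ModuleCat.{u} R} [Module.Finite R X]
    {n : ℕ} {x : R} (hx : x ∈ maximalIdeal R)
    (hsurj : Function.Surjective ((Ext.mk₀ (x • 𝟙 X)).precomp M (zero_add n))) :
    Subsingleton (Ext X M n) := by
  refine subsingleton_of_smul_surjective hx fun e ↦ ?_
  obtain ⟨e', rfl⟩ := hsurj e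
  exact ⟨e', (mk₀_smul_id_comp x e').symm⟩

lemma subsingleton_ext_quotient_of_residueField {n : ℕ}
    (h : ∀ i, n ≤ i → Subsingleton (Ext (residueFieldModule R) M i))
    (I : Ideal R) : ∀ i, n ≤ i → Subsingleton (Ext (ModuleCat.of R (R ⧸ I)) M i) := by
  induction I using WellFoundedGT.induction with | ind I ih
  intro i hi
  by_cases hmI : maximalIdeal R ≤ I
  · obtain rfl | rfl := (maximalIdeal.isMaximal R).out.le_iff.1 hmI
    · exact subsingleton_ext_of_isZero M
        (ModuleCat.isZero_of_iff_subsingleton.2 (inferInstanceAs (Subsingleton (R ⧸ ⊤))))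
    · exact h i hi
  obtain ⟨x, hxm, hxI⟩ := SetLike.not_le_iff_exists.1 hmI
  let μ : R →ₗ[R] R := LinearMap.lsmul R R x
  have hI_lt_sup : I < I ⊔ LinearMap.range μ :=
    left_lt_sup.2 fun hle ↦ hxI (hle ⟨1, mul_one x⟩)
  have hI_le_colon : I ≤ Submodule.comap μ I := fun r hr ↦ I.mul_mem_left x hr
  obtain hlt | heq := hI_le_colon.lt_or_eq
  · exact subsingleton_ext_X₂ M (shortExact_quotient_comap μ rfl) (ih _ hlt i hi)
      (ih _ hI_lt_sup i hi)
  · have hμ : ModuleCat.ofHom (I.mapQ I μ heq.le) = x • 𝟙 (ModuleCat.of R (R ⧸ I)) := by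
      ext; rfl
    have := precomp_mk₀_f_surjective M (shortExact_quotient_comap μ heq)
      (ih _ hI_lt_sup (i + 1) (by omega))
    exact subsingleton_ext_of_precomp_smul_surjective M hxm (hμ ▸ this)

theorem hasInjectiveDimensionLT_iff_residueField {n : ℕ} :
    HasInjectiveDimensionLT M n ↔ ∀ i, n ≤ i → Subsingleton (Ext (residueFieldModule R) M i) :=
  ⟨fun _ i hi ↦ HasInjectiveDimensionLT.subsingleton M n i hi _, fun h ↦
    hasInjectiveDimensionLT_of_forall_ideal M n fun I ↦
      subsingleton_ext_quotient_of_residueField M h I n le_rfl⟩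

lemma exists_hasInjectiveDimensionLE_nontrivial_ext [Nontrivial M] {n : ℕ}
    (hM : HasInjectiveDimensionLT M n) :
    ∃ d, HasInjectiveDimensionLE M d ∧ Nontrivial (Ext (residueFieldModule R) M d) := by
  classical
  have hex : ∃ n, HasInjectiveDimensionLT M n := ⟨n, hM⟩
  have hzero : ¬ HasInjectiveDimensionLT M 0 := by
    rw [hasInjectiveDimensionLT_zero_iff_isZero, ModuleCat.isZero_iff_subsingleton]
    exact not_subsingleton M
  obtain ⟨d, hd⟩ := Nat.exists_eq_succ_of_ne_zero fun h0 ↦ hzero (h0 ▸ Nat.find_spec hex)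
  have hd_le : HasInjectiveDimensionLT M d.succ := hd ▸ Nat.find_spec hex
  have hd_lt : ¬ HasInjectiveDimensionLT M d := Nat.find_min hex (by omega)
  rw [hasInjectiveDimensionLT_iff_residueField] at hd_lt
  push Not at hd_lt
  obtain ⟨i, hdi, hi⟩ := hd_lt
  obtain hdi | rfl := hdi.lt_or_eq
  · exact (not_nontrivial_iff_subsingleton.2
      (HasInjectiveDimensionLT.subsingleton M (d + 1) i hdi _) hi).elim
  · exact ⟨d, hd_le, hi⟩

end Bass

section RegularSequence

variable {R : Type u} [CommRing R]

lemma exists_surjective_ext_of_isWeaklyRegular (B : ModuleCat.{u} R) (rs : List R) :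
    ∀ (M : ModuleCat.{u} R) (j : ℕ), HasProjectiveDimensionLE M j → IsWeaklyRegular M rs →
      ∃ φ : Ext M B j →ₗ[R]
          Ext (ModuleCat.of R (M ⧸ Ideal.ofList rs • (⊤ : Submodule R M))) B (j + rs.length),
        Function.Surjective φ := by
  induction rs with
  | nil =>
    intro M j _ _
    let e := (Submodule.quotEquivOfEqBot (Ideal.ofList ([] : List R) • (⊤ : Submodule R M))
      (by simp)).toModuleIso
    exact ⟨Ext.precompOfLinear (Ext.mk₀ e.hom) R B (zero_add j),
      precomp_mk₀_surjective_of_iso B e⟩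
  | cons r rs ih =>
    intro M j hM hreg
    rw [isWeaklyRegular_cons_iff] at hreg
    have hS := hreg.1.smulShortComplex_shortExact
    have hpd : HasProjectiveDimensionLE (ModuleCat.of R (QuotSMulTop r M)) (j + 1) :=
      hS.hasProjectiveDimensionLT_X₃ (j + 1) hM
        (hasProjectiveDimensionLT_of_ge M (j + 1) _ (by omega))
    let δ := Ext.precompOfLinear hS.extClass R B (add_comm 1 j)
    have hδ : Function.Surjective δ := fun x ↦
      Ext.contravariant_sequence_exact₃ hS B x
        ((HasProjectiveDimensionLT.subsingleton M (j + 1) _ le_rfl B).elim _ _) (add_comm 1 j)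
    obtain ⟨φ, hφ⟩ := ih (ModuleCat.of R (QuotSMulTop r M)) (j + 1) hpd hreg.2
    let e := (Submodule.quotOfListConsSMulTopEquivQuotSMulTopInner M r rs).toModuleIso
    rw [List.length_cons, ← add_assoc, add_right_comm]
    exact ⟨Ext.precompOfLinear (Ext.mk₀ e.hom) R B (zero_add _) ∘ₗ φ ∘ₗ δ,
      (precomp_mk₀_surjective_of_iso B e).comp (hφ.comp hδ)⟩

lemma exists_surjective_ext_quotient_of_isWeaklyRegular (B : ModuleCat.{u} R) {rs : List R}
    (hrs : IsWeaklyRegular R rs) :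
    ∃ φ : B →ₗ[R] Ext (ModuleCat.of R (R ⧸ Ideal.ofList rs • (⊤ : Ideal R))) B rs.length,
      Function.Surjective φ := by
  have hext := exists_surjective_ext_of_isWeaklyRegular B rs (.of R R) 0 inferInstance hrs
  rw [zero_add] at hext
  obtain ⟨φ, hφ⟩ := hext
  let e : B ≃ₗ[R] Ext (ModuleCat.of R R) B 0 :=
    (LinearMap.ringLmapEquivSelf R R B).symm ≪≫ₗ
      (ModuleCat.homLinearEquiv (M := .of R R) (N := B) (S := R)).symm ≪≫ₗ
      Ext.linearEquiv₀.symm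
  exact ⟨φ ∘ₗ e, hφ.comp e.surjective⟩

variable [IsLocalRing R] [IsNoetherianRing R]

lemma exists_isRegular_nontrivial_linearMap (M : ModuleCat.{u} R) [Module.Finite R M]
    [Nontrivial M] {t : ℕ}
    (hlt : ∀ i < t, Subsingleton (Ext (residueFieldModule R) M i))
    (ht : Nontrivial (Ext (residueFieldModule R) M t)) :
    ∃ rs : List R, rs.length = t ∧ (∀ r ∈ rs, r ∈ maximalIdeal R) ∧ IsRegular M rs ∧
      Nontrivial ((R ⧸ maximalIdeal R) →ₗ[R] M ⧸ Ideal.ofList rs • (⊤ : Submodule R M)) := by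
  have hsupp : Module.support R (R ⧸ maximalIdeal R) =
      PrimeSpectrum.zeroLocus (maximalIdeal R) := by
    rw [Module.support_eq_zeroLocus, Ideal.annihilator_quotient]
  have hsmul : maximalIdeal R • (⊤ : Submodule R M) < ⊤ :=
    (Submodule.top_ne_ideal_smul_of_le_jacobson_annihilator
      (maximalIdeal_le_jacobson _)).symm.lt_top
  obtain ⟨rs, hlen, hmem, hreg⟩ := ModuleCat.exists_isRegular_of_exists_subsingleton_ext
    (maximalIdeal R) t M hsmul (residueFieldModule R) hsupp hlt
  refine ⟨rs, hlen, hmem, hreg, ?_⟩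
  by_contra! hhom
  rw [IsSMulRegular.subsingleton_linearMap_iff, Ideal.annihilator_quotient] at hhom
  obtain ⟨r, hr, hreg_r⟩ := hhom
  have hmem' : ∀ s ∈ rs ++ [r], s ∈ maximalIdeal R := by
    simpa only [List.forall_mem_append, List.forall_mem_singleton] using ⟨hmem, hr⟩
  have hreg' : IsWeaklyRegular M (rs ++ [r]) :=
    (isWeaklyRegular_append_iff M rs [r]).2
      ⟨hreg.toIsWeaklyRegular, (isWeaklyRegular_singleton_iff _ r).2 hreg_r⟩
  have := ModuleCat.subsingleton_ext_of_exists_isRegular (maximalIdeal R)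
    (residueFieldModule R) hsupp.le M hsmul (rs ++ [r]) hmem'
    (.of_isWeaklyRegular_of_mem_maximalIdeal M hmem' hreg') t (by simp [hlen])
  exact not_subsingleton _ this

end RegularSequence

section Gorenstein

variable (R : Type u) [CommRing R] [IsLocalRing R] [IsNoetherianRing R]

lemma exists_mono_residueField_surjective_ext (B : ModuleCat.{u} R) {t : ℕ}
    (hlt : ∀ i < t, Subsingleton (Ext (residueFieldModule R) (ModuleCat.of R R) i))
    (ht : Nontrivial (Ext (residueFieldModule R) (ModuleCat.of R R) t)) :
    ∃ (N : ModuleCat.{u} R) (f : residueFieldModule R ⟶ N), Mono f ∧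
      HasProjectiveDimensionLE N t ∧ ∃ φ : B →ₗ[R] Ext N B t, Function.Surjective φ := by
  obtain ⟨rs, rfl, hmem, hreg, hhom⟩ := exists_isRegular_nontrivial_linearMap _ hlt ht
  obtain ⟨f, hf⟩ := exists_ne
    (0 : (R ⧸ maximalIdeal R) →ₗ[R] R ⧸ Ideal.ofList rs • (⊤ : Ideal R))
  have : IsSimpleModule R (R ⧸ maximalIdeal R) :=
    isSimpleModule_iff_isCoatom.2 (maximalIdeal.isMaximal R).out
  refine ⟨_, ModuleCat.ofHom f, (ModuleCat.mono_iff_injective _).2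
    (f.injective_or_eq_zero.resolve_right hf), ?_,
    exists_surjective_ext_quotient_of_isWeaklyRegular B hreg.toIsWeaklyRegular⟩
  rw [← projectiveDimension_le_iff,
    ModuleCat.projectiveDimension_quotient_eq_add_length_of_isWeaklyRegular (.of R R) rs
      hreg.toIsWeaklyRegular hmem, ModuleCat.projectiveDimension_eq_zero_of_projective, zero_add]

theorem exists_ext_residueField_equiv_of_hasInjectiveDimensionLT {n : ℕ}
    (hR : HasInjectiveDimensionLT (ModuleCat.of R R) n) :
    ∃ d, Nonempty (Ext (residueFieldModule R) (ModuleCat.of R R) d ≃ₗ[R] R ⧸ maximalIdeal R) ∧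
      ∀ i ≠ d, Subsingleton (Ext (residueFieldModule R) (ModuleCat.of R R) i) := by
  classical
  obtain ⟨d, hinj, hd⟩ := exists_hasInjectiveDimensionLE_nontrivial_ext _ hR
  have hex : ∃ t, Nontrivial (Ext (residueFieldModule R) (ModuleCat.of R R) t) := ⟨d, hd⟩
  obtain ⟨t, ht, hlt, htd⟩ : ∃ t,
      Nontrivial (Ext (residueFieldModule R) (ModuleCat.of R R) t) ∧
      (∀ i < t, Subsingleton (Ext (residueFieldModule R) (ModuleCat.of R R) i)) ∧ t ≤ d :=
    ⟨Nat.find hex, Nat.find_spec hex, fun _ hi ↦ not_nontrivial_iff_subsingleton.1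
      (Nat.find_min hex hi), Nat.find_min' hex hd⟩
  obtain ⟨N, f, _, hN, φ, hφ⟩ := exists_mono_residueField_surjective_ext R (.of R R) hlt ht
  have hf := precomp_mk₀_surjective_of_mono (n := d) (ModuleCat.of R R) f
  obtain rfl : t = d := htd.antisymm <| not_lt.1 fun hlt' ↦ by
    have := HasProjectiveDimensionLT.subsingleton N (t + 1) d hlt' (ModuleCat.of R R)
    exact not_subsingleton _ hf.subsingleton
  refine ⟨t, nonempty_linearEquiv_quotient_of_surjective (maximalIdeal.isMaximal R) ?_
    (φ := Ext.precompOfLinear (Ext.mk₀ f) R _ (zero_add t) ∘ₗ φ) (hf.comp hφ), fun i hi ↦ ?_⟩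
  · refine Eq.trans_le ?_ (annihilator_le_annihilator_ext (residueFieldModule R) _ t)
    exact Ideal.annihilator_quotient.symm
  · obtain hi | hi := hi.lt_or_gt
    · exact hlt i hi
    · exact HasInjectiveDimensionLT.subsingleton _ (t + 1) i hi _

end Gorenstein

/-- A commutative Noetherian local ring `R` with residue field `k` is
Gorenstein — in the sense that `Ext^*_R(k,R)` is concentrated in one degree where it
equals `k` — if and only if `R` has finite injective dimension as a module over itself
(expressed by the standard characterization: there is `n` such that `Ext^i_R(M,R) = 0`
for all modules `M` and all `i > n`). -/
theorem gorenstein_iff_finite_injective_dimension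
    (R : Type u) [CommRing R] [IsNoetherianRing R] [IsLocalRing R]
    [HasExt.{u} (ModuleCat.{u} R)] :
    ((∃ d : ℕ,
        Nonempty (Abelian.Ext (ModuleCat.of R (R ⧸ IsLocalRing.maximalIdeal R))
            (ModuleCat.of R R) d ≃+ (R ⧸ IsLocalRing.maximalIdeal R)) ∧
        ∀ i : ℕ, i ≠ d →
          Subsingleton (Abelian.Ext (ModuleCat.of R (R ⧸ IsLocalRing.maximalIdeal R))
            (ModuleCat.of R R) i)) ↔
      (∃ n : ℕ, ∀ (M : ModuleCat.{u} R) (i : ℕ), n < i →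
        Subsingleton (Abelian.Ext M (ModuleCat.of R R) i))) := by
  constructor
  · rintro ⟨d, -, hd⟩
    have : HasInjectiveDimensionLT (ModuleCat.of R R) (d + 1) :=
      (hasInjectiveDimensionLT_iff_residueField _).2 fun i hi ↦ hd i (by omega)
    exact ⟨d, fun M i hi ↦ HasInjectiveDimensionLT.subsingleton _ (d + 1) i hi M⟩
  · rintro ⟨n, hn⟩
    have : HasInjectiveDimensionLT (ModuleCat.of R R) (n + 1) :=
      HasInjectiveDimensionLT.mk fun i hi M e ↦ (hn M i hi).elim e 0
    obtain ⟨d, ⟨e⟩, hd⟩ := exists_ext_residueField_equiv_of_hasInjectiveDimensionLT R this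
    exact ⟨d, ⟨e.toAddEquiv⟩, hd⟩
end

section
/- Let R be a commutative Noetherian local ring with residue field k. Then R is regular if and only if k has finite projective dimension as an R-module (Serre's theorem); in particular, if R is regular then k is a perfect complex over R. -/
open CategoryTheory Pretriangulated Limits

universe v u

variable {C : Type u} [Category.{v} C] [HasZeroObject C] [Preadditive C]
  [HasShift C ℤ] [∀ n : ℤ, (shiftFunctor C n).Additive] [Pretriangulated C]

/-- `IsThickBuilt S X` : `X` belongs to the thick subcategory generated by `S`. -/
inductive IsThickBuilt (S : C) : C → Prop
  | base : IsThickBuilt S S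
  | of_iso {X Y : C} (_ : X ≅ Y) : IsThickBuilt S X → IsThickBuilt S Y
  | shift (X : C) (n : ℤ) : IsThickBuilt S X → IsThickBuilt S (X⟦n⟧)
  | ext₂ {T : Triangle C} (_ : T ∈ distTriang C) :
      IsThickBuilt S T.obj₁ → IsThickBuilt S T.obj₃ → IsThickBuilt S T.obj₂
  | retract {X Y : C} (i : Y ⟶ X) (p : X ⟶ Y) (_ : i ≫ p = 𝟙 Y) :
      IsThickBuilt S X → IsThickBuilt S Y

universe w

/-!
The implication from regular to finite projective dimension, and perfection of `k`, come from the
short exact sequences `0 → M → M → M ⧸ xM → 0` along a regular sequence generating `𝔪`.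

Conversely, let `k` have finite projective dimension and `𝔪 ≠ 0`. If `𝔪` were an associated prime,
`k` would embed in `R`; tensoring that embedding with a first syzygy shows that every finite module
of finite projective dimension is free, in particular `k`, which is absurd. Prime avoidance then
gives a regular element `x ∈ 𝔪 \ 𝔪²`. The projective dimension of `𝔪 ⧸ x𝔪` over `R ⧸ (x)` is finite,
and `𝔪 ⧸ (x)` is a direct summand of it since a linear form on `𝔪 ⧸ 𝔪²` equal to `1` at `x` splits
`k → 𝔪 ⧸ x𝔪`. Hence the residue field of `R ⧸ (x)` has finite projective dimension, and induction on
the Krull dimension applies.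
-/

open IsLocalRing

section ProjectiveDimension

lemma projectiveDimension_ne_top_iff_exists_subsingleton_ext {A : Type u} [Category.{v} A]
    [Abelian A] [HasExt.{w} A] (X : A) :
    projectiveDimension X ≠ ⊤ ↔
      ∃ n : ℕ, ∀ (Y : A) (i : ℕ), n < i → Subsingleton (Abelian.Ext X Y i) := by
  rw [projectiveDimension_ne_top_iff]
  exact exists_congr fun n ↦
    ⟨fun _ Y i hi ↦ HasProjectiveDimensionLT.subsingleton X (n + 1) i hi Y,
      fun h ↦ HasProjectiveDimensionLT.mk fun i hi Y _ ↦ (h Y i hi).elim _ _⟩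

lemma module_projective_iff_hasProjectiveDimensionLE_zero {R : Type u} [Ring R] [Small.{v} R]
    {M : ModuleCat.{v} R} : Module.Projective R M ↔ HasProjectiveDimensionLE M 0 := by
  rw [IsProjective.iff_projective, projective_iff_hasProjectiveDimensionLE_zero]

end ProjectiveDimension

section ThickSubcategory

open DerivedCategory RingTheory.Sequence

lemma isThickBuilt_singleFunctor_obj_X₃ {A : Type u} [Category.{v} A] [Abelian A]
    [HasDerivedCategory.{w} A] {G : DerivedCategory A} {S : ShortComplex A} (hS : S.ShortExact)
    (h₁ : IsThickBuilt G ((singleFunctor A 0).obj S.X₁))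
    (h₂ : IsThickBuilt G ((singleFunctor A 0).obj S.X₂)) :
    IsThickBuilt G ((singleFunctor A 0).obj S.X₃) :=
  .ext₂ (rot_of_distTriang _ hS.singleTriangle_distinguished) h₂ (.shift _ 1 h₁)

variable {R : Type u} [CommRing R]

lemma isThickBuilt_quotient_ofList_smul_top [HasDerivedCategory.{w} (ModuleCat.{v} R)]
    {G : DerivedCategory (ModuleCat.{v} R)} {rs : List R} {M : ModuleCat.{v} R}
    (hrs : IsWeaklyRegular M rs) (hM : IsThickBuilt G ((singleFunctor _ 0).obj M)) :
    IsThickBuilt G ((singleFunctor _ 0).obj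
      (ModuleCat.of R (M ⧸ Ideal.ofList rs • (⊤ : Submodule R M)))) := by
  induction rs generalizing M with
  | nil =>
    refine hM.of_iso ((singleFunctor _ 0).mapIso (LinearEquiv.toModuleIso ?_))
    exact (Submodule.quotEquivOfEqBot _ (by rw [Ideal.ofList_nil, Submodule.bot_smul])).symm
  | cons x rs ih =>
    rw [isWeaklyRegular_cons_iff] at hrs
    have hquot : IsThickBuilt G ((singleFunctor _ 0).obj (ModuleCat.of R (QuotSMulTop x M))) :=
      isThickBuilt_singleFunctor_obj_X₃ hrs.1.smulShortComplex_shortExact hM hM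
    refine (ih hrs.2 hquot).of_iso ((singleFunctor _ 0).mapIso (LinearEquiv.toModuleIso ?_))
    exact (Submodule.quotOfListConsSMulTopEquivQuotSMulTopInner M x rs).symm

end ThickSubcategory

section RegularSequence

open RingTheory.Sequence

/-- The ideal `I` is generated by a regular sequence. A Noetherian local ring is regular exactly
when its maximal ideal has this property. -/
def IsGeneratedByRegularSequence {R : Type u} [CommRing R] (I : Ideal R) : Prop :=
  ∃ rs : List R, IsRegular R rs ∧ Ideal.ofList rs = I

namespace IsGeneratedByRegularSequence

variable {R : Type u} [CommRing R] {I : Ideal R}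

lemma isThickBuilt_quotient [HasDerivedCategory.{w} (ModuleCat.{u} R)]
    (hI : IsGeneratedByRegularSequence I) :
    IsThickBuilt ((DerivedCategory.singleFunctor _ 0).obj (ModuleCat.of R R))
      ((DerivedCategory.singleFunctor _ 0).obj (ModuleCat.of R (R ⧸ I))) := by
  obtain ⟨rs, hrs, rfl⟩ := hI
  refine (isThickBuilt_quotient_ofList_smul_top (M := ModuleCat.of R R)
    hrs.toIsWeaklyRegular .base).of_iso ((DerivedCategory.singleFunctor _ 0).mapIso
      (LinearEquiv.toModuleIso (Submodule.quotEquivOfEq _ _ ?_)))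
  rw [smul_eq_mul, Ideal.mul_top]

lemma projectiveDimension_quotient_ne_top [IsNoetherianRing R] [IsLocalRing R]
    (hI : IsGeneratedByRegularSequence I) :
    projectiveDimension (ModuleCat.of R (R ⧸ I)) ≠ ⊤ := by
  obtain ⟨rs, hrs, rfl⟩ := hI
  rw [← ModuleCat.projectiveDimension_eq_of_linearEquiv
      (M := ModuleCat.of R (Shrink.{u} (R ⧸ Ideal.ofList rs))) (Shrink.linearEquiv R _),
    ModuleCat.projectiveDimension_quotient_eq_length rs hrs]
  exact WithBot.coe_injective.ne (ENat.natCast_ne_top _)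

lemma of_map_span_singleton {x : R} (hreg : IsSMulRegular R x) (hx : x ∈ I)
    (hI : IsGeneratedByRegularSequence (I.map (algebraMap R (R ⧸ Ideal.span {x})))) :
    IsGeneratedByRegularSequence I := by
  obtain ⟨rs', hrs', hspan⟩ := hI
  obtain ⟨rs, rfl⟩ := List.map_surjective_iff.mpr Ideal.Quotient.mk_surjective rs'
  refine ⟨x :: rs, .cons' hreg ?_, ?_⟩
  · have e : QuotSMulTop x R ≃ₗ[R ⧸ Ideal.span {x}] (R ⧸ Ideal.span {x}) :=
      LinearEquiv.extendScalarsOfSurjective Ideal.Quotient.mk_surjective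
        (Submodule.quotEquivOfEq _ _ (by rw [← Submodule.ideal_span_singleton_smul]; simp))
    exact (e.isRegular_congr _).mpr hrs'
  · have hsup : Ideal.ofList rs ⊔ Ideal.span {x} = I ⊔ Ideal.span {x} := by
      rw [← Ideal.map_ofList] at hspan
      simpa only [Ideal.Quotient.algebraMap_eq, Ideal.mk_ker,
        Ideal.comap_map_of_surjective' _ Ideal.Quotient.mk_surjective]
        using congrArg (Ideal.comap (Ideal.Quotient.mk (Ideal.span {x}))) hspan
    rw [Ideal.ofList_cons, sup_comm, hsup, sup_eq_left, Ideal.span_singleton_le_iff_mem]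
    exact hx

end IsGeneratedByRegularSequence

end RegularSequence

section DepthZero

lemma lTensor_injective_of_injective_of_flat {R K F N P : Type*} [CommRing R] [AddCommGroup K]
    [Module R K] [AddCommGroup F] [Module R F] [AddCommGroup N] [Module R N] [AddCommGroup P]
    [Module R P] [Module.Flat R K] [Module.Flat R P] {i : K →ₗ[R] F} (hi : Function.Injective i)
    {j : N →ₗ[R] P} (hj : Function.Injective j) : Function.Injective (i.lTensor N) := by
  have hcomp : Function.Injective (i.lTensor P ∘ₗ j.rTensor K) :=
    (Module.Flat.lTensor_preserves_injective_linearMap i hi).comp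
      (Module.Flat.rTensor_preserves_injective_linearMap j hj)
  rw [LinearMap.lTensor_comp_rTensor, ← LinearMap.rTensor_comp_lTensor,
    LinearMap.coe_comp] at hcomp
  exact hcomp.of_comp

variable {R : Type u} [CommRing R] [IsNoetherianRing R] [IsLocalRing R]

lemma free_of_isAssociatedPrime_maximalIdeal [Small.{v} R]
    (hass : IsAssociatedPrime (maximalIdeal R) R) {n : ℕ} (M : ModuleCat.{v} R)
    [Module.Finite R M] [HasProjectiveDimensionLE M n] : Module.Free R M := by
  obtain ⟨-, j, hj⟩ := (isAssociatedPrime_iff_exists_injective_linearMap _ _).mp hass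
  induction n generalizing M with
  | zero =>
    have : Module.Projective R M := module_projective_iff_hasProjectiveDimensionLE_zero.mpr ‹_›
    exact Module.free_of_flat_of_isLocalRing
  | succ n ih =>
    obtain ⟨F, _, _, _, _, f, hf⟩ := Module.exists_finite_presentation R M
    have : HasProjectiveDimensionLE f.shortComplexKer.X₁ n :=
      ((LinearMap.shortExact_shortComplexKer hf).hasProjectiveDimensionLT_X₃_iff n
        inferInstance).mp ‹_›
    have : Module.Free R (LinearMap.ker f) := ih f.shortComplexKer.X₁
    exact Module.free_of_lTensor_residueField_injective _ f hf
      (LinearMap.exact_subtype_ker_map f)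
      (lTensor_injective_of_injective_of_flat (Submodule.injective_subtype _) hj)

lemma not_isAssociatedPrime_maximalIdeal (hm : maximalIdeal R ≠ ⊥)
    (hpd : projectiveDimension (ModuleCat.of R (R ⧸ maximalIdeal R)) ≠ ⊤) :
    ¬ IsAssociatedPrime (maximalIdeal R) R := by
  intro hass
  obtain ⟨n, _⟩ := (projectiveDimension_ne_top_iff _).mp hpd
  have : Module.Free R (R ⧸ maximalIdeal R) :=
    free_of_isAssociatedPrime_maximalIdeal hass (n := n) (ModuleCat.of R _)
  apply hm
  rw [← Ideal.annihilator_quotient (I := maximalIdeal R)]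
  exact Module.annihilator_eq_bot.mpr inferInstance

lemma exists_isSMulRegular_notMem_sq (hm : maximalIdeal R ≠ ⊥)
    (hass : ¬ IsAssociatedPrime (maximalIdeal R) R) :
    ∃ x ∈ maximalIdeal R, x ∉ maximalIdeal R ^ 2 ∧ IsSMulRegular R x := by
  by_contra! hcon
  have hcover : (maximalIdeal R : Set R) ⊆
      ⋃ p ∈ insert (maximalIdeal R ^ 2) (associatedPrimes R R), (id p : Ideal R) := by
    simp only [Set.biUnion_insert, id, biUnion_associatedPrimes_eq_compl_regular]
    exact fun x hx ↦ or_iff_not_imp_left.mpr (hcon x hx)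
  obtain ⟨p, rfl | hp, hle⟩ := (Ideal.subset_union_prime_finite
    ((associatedPrimes.finite R R).insert _) (maximalIdeal R ^ 2) (maximalIdeal R ^ 2)
    (fun p hp hne _ ↦ (hp.resolve_left hne).isPrime)).mp hcover
  · refine hm (Submodule.eq_bot_of_le_smul_of_le_jacobson_bot (maximalIdeal R) _
      (IsNoetherian.noetherian _) ?_ (maximalIdeal_le_jacobson _))
    rwa [smul_eq_mul, ← pow_two]
  · obtain rfl : maximalIdeal R = p := hle.antisymm (le_maximalIdeal hp.isPrime.ne_top)
    exact hass hp

end DepthZero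

section QuotSMulTop

open Function

variable {R : Type u} [CommRing R]

/-- The reduction modulo `x` of a short complex of `R`-modules, over the ring `R ⧸ (x)`. -/
abbrev quotSMulTopShortComplex (x : R) (S : ShortComplex (ModuleCat.{v} R)) :
    ShortComplex (ModuleCat.{v} (R ⧸ Ideal.span {x})) :=
  ModuleCat.shortComplexOfCompEqZero
    ((QuotSMulTop.map x S.f.hom).extendScalarsOfSurjective Ideal.Quotient.mk_surjective)
    ((QuotSMulTop.map x S.g.hom).extendScalarsOfSurjective Ideal.Quotient.mk_surjective)
    (LinearMap.ext fun y ↦ by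
      have h := LinearMap.congr_fun (QuotSMulTop.map_comp x S.g.hom S.f.hom) y
      rw [← ModuleCat.hom_comp, S.zero, ModuleCat.hom_zero, map_zero] at h
      exact h.symm)

lemma quotSMulTopShortComplex_shortExact {x : R} {S : ShortComplex (ModuleCat.{v} R)}
    (hS : S.ShortExact) (hx : IsSMulRegular S.X₃ x) :
    (quotSMulTopShortComplex x S).ShortExact := by
  have hexact : Exact S.f.hom S.g.hom :=
    (ShortComplex.ShortExact.moduleCat_exact_iff_function_exact S).mp hS.exact
  refine
    { exact := ModuleCat.shortComplex_exact _
        (QuotSMulTop.map_exact x hexact hS.moduleCat_surjective_g)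
      mono_f := (ModuleCat.mono_iff_injective _).mpr ?_
      epi_g := (ModuleCat.epi_iff_surjective _).mpr
        (QuotSMulTop.map_surjective x hS.moduleCat_surjective_g) }
  have hzero : Exact (0 : S.X₁ →ₗ[R] S.X₁) S.f.hom :=
    (LinearMap.exact_zero_iff_injective _ _).mpr hS.moduleCat_injective_f
  have hmap := QuotSMulTop.map_first_exact_on_four_term_exact_of_isSMulRegular_last hzero hexact hx
  rw [map_zero] at hmap
  exact (LinearMap.exact_zero_iff_injective _ _).mp hmap

instance module_projective_quotSMulTop {M : Type v} [AddCommGroup M] [Module R M]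
    [Module.Projective R M] (x : R) : Module.Projective (R ⧸ Ideal.span {x}) (QuotSMulTop x M) :=
  .of_equiv ((QuotSMulTop.equivQuotTensor x M).extendScalarsOfSurjective
    Ideal.Quotient.mk_surjective).symm

lemma hasProjectiveDimensionLE_quotSMulTop [Small.{v} R] {x : R} (hx : IsSMulRegular R x) {n : ℕ}
    (M : ModuleCat.{v} R) (hM : IsSMulRegular M x) [HasProjectiveDimensionLE M n] :
    HasProjectiveDimensionLE (ModuleCat.of (R ⧸ Ideal.span {x}) (QuotSMulTop x M)) n := by
  induction n generalizing M with
  | zero =>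
    have : Module.Projective R M := module_projective_iff_hasProjectiveDimensionLE_zero.mpr ‹_›
    exact module_projective_iff_hasProjectiveDimensionLE_zero.mp inferInstance
  | succ n ih =>
    let S := M.projectiveShortComplex
    have hS : S.ShortExact := M.shortExact_projectiveShortComplex
    have hX₂ : IsSMulRegular S.X₂ x :=
      Module.Flat.isSMulRegular_of_isRegular (isLeftRegular_iff_isRegular.mp hx)
    have hX₁ : IsSMulRegular S.X₁ x := hX₂.of_injective S.f.hom hS.moduleCat_injective_f
    have : HasProjectiveDimensionLE S.X₁ n := (hS.hasProjectiveDimensionLT_X₃_iff n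
      ((IsProjective.iff_projective S.X₂).mp inferInstance)).mp ‹_›
    exact ((quotSMulTopShortComplex_shortExact hS hM).hasProjectiveDimensionLT_X₃_iff n
      ((IsProjective.iff_projective _).mp inferInstance)).mpr (ih S.X₁ hX₁)

end QuotSMulTop

section Splitting

open scoped Pointwise

variable {R : Type u} [CommRing R] (I : Ideal R)

lemma hasProjectiveDimensionLE_quotient_succ_iff {n : ℕ} :
    HasProjectiveDimensionLE (ModuleCat.of R (R ⧸ I)) (n + 1) ↔
      HasProjectiveDimensionLE (ModuleCat.of R I) n := by
  have hS : (ModuleCat.shortComplexOfCompEqZero I.subtype I.mkQ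
      (LinearMap.exact_subtype_mkQ I).linearMap_comp_eq_zero).ShortExact :=
    { exact := ModuleCat.shortComplex_exact _ (LinearMap.exact_subtype_mkQ I)
      mono_f := (ModuleCat.mono_iff_injective _).mpr (Submodule.injective_subtype I)
      epi_g := (ModuleCat.epi_iff_surjective _).mpr (Submodule.mkQ_surjective I) }
  exact hS.hasProjectiveDimensionLT_X₃_iff n
    (inferInstanceAs (Projective (ModuleCat.of R R)))

variable {I} {x : R} (hx : x ∈ I)

/-- The map `R ⧸ I → I ⧸ xI` sending `1` to the class of `x`. -/
def quotientToQuotSMulTop : R ⧸ I →ₗ[R] QuotSMulTop x I :=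
  I.liftQ (LinearMap.toSpanSingleton R _ (Submodule.Quotient.mk ⟨x, hx⟩)) fun r hr ↦ by
    rw [LinearMap.mem_ker, LinearMap.toSpanSingleton_apply, ← Submodule.Quotient.mk_smul,
      Submodule.Quotient.mk_eq_zero, Submodule.mem_smul_pointwise_iff_exists]
    exact ⟨⟨r, hr⟩, trivial, Subtype.ext (mul_comm x r)⟩

lemma quotientToQuotSMulTop_one :
    quotientToQuotSMulTop hx 1 = Submodule.Quotient.mk ⟨x, hx⟩ :=
  one_smul R (Submodule.Quotient.mk ⟨x, hx⟩ : QuotSMulTop x I)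

variable (I x) in
/-- The reduction map `I ⧸ xI → I(R ⧸ (x))`. -/
def quotSMulTopToMap :
    QuotSMulTop x I →ₗ[R] I.map (algebraMap R (R ⧸ Ideal.span {x})) :=
  Submodule.liftQ _ (Algebra.idealMap (R ⧸ Ideal.span {x}) I) fun y hy ↦ by
    obtain ⟨z, -, rfl⟩ := (Submodule.mem_smul_pointwise_iff_exists _ _ _).mp hy
    ext
    exact Ideal.Quotient.eq_zero_iff_mem.mpr
      (Ideal.mul_mem_right _ _ (Ideal.mem_span_singleton_self x))

variable (I x) in
lemma quotSMulTopToMap_surjective : Function.Surjective (quotSMulTopToMap I x) := by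
  rintro ⟨y, hy⟩
  obtain ⟨r, hr, rfl⟩ := (Ideal.mem_map_iff_of_surjective _ Ideal.Quotient.mk_surjective).mp hy
  exact ⟨Submodule.Quotient.mk ⟨r, hr⟩, rfl⟩

lemma quotientToQuotSMulTop_exact_quotSMulTopToMap :
    Function.Exact (quotientToQuotSMulTop hx) (quotSMulTopToMap I x) := by
  refine LinearMap.exact_of_comp_eq_zero_of_ker_le_range ?_ ?_
  · refine Submodule.linearMap_qext I (LinearMap.ext_ring ?_)
    change quotSMulTopToMap I x (quotientToQuotSMulTop hx 1) = 0
    rw [quotientToQuotSMulTop_one]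
    exact Subtype.ext (Ideal.Quotient.eq_zero_iff_mem.mpr (Ideal.mem_span_singleton_self x))
  · intro y hy
    obtain ⟨⟨y, hyI⟩, rfl⟩ := Submodule.Quotient.mk_surjective _ y
    have hyx : y ∈ Ideal.span {x} := Ideal.Quotient.eq_zero_iff_mem.mp (congrArg Subtype.val hy)
    obtain ⟨r, rfl⟩ := Ideal.mem_span_singleton'.mp hyx
    exact ⟨Ideal.Quotient.mk I r, rfl⟩

/-- As `x ∉ I ^ 2`, some linear form on the `R ⧸ I`-vector space `I ⧸ I ^ 2` sends `x` to `1`. -/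
lemma exists_leftInverse_quotientToQuotSMulTop [I.IsMaximal] (hx2 : x ∉ I ^ 2) :
    ∃ l, l ∘ₗ quotientToQuotSMulTop hx = LinearMap.id := by
  let _ : Field (R ⧸ I) := Ideal.Quotient.field I
  have hne : I.toCotangent ⟨x, hx⟩ ≠ 0 := (I.toCotangent_eq_zero ⟨x, hx⟩).not.mpr hx2
  obtain ⟨φ, hφ⟩ := Module.Projective.exists_dual_eq_one (R ⧸ I) hne
  have hker : x • (⊤ : Submodule R I) ≤ LinearMap.ker (φ.restrictScalars R ∘ₗ I.toCotangent) := by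
    intro y hy
    obtain ⟨z, -, rfl⟩ := (Submodule.mem_smul_pointwise_iff_exists _ _ _).mp hy
    rw [LinearMap.mem_ker, map_smul, Algebra.smul_def, Ideal.Quotient.algebraMap_eq,
      Ideal.Quotient.eq_zero_iff_mem.mpr hx, zero_mul]
  refine ⟨Submodule.liftQ _ _ hker, Submodule.linearMap_qext I (LinearMap.ext_ring ?_)⟩
  exact (congrArg (Submodule.liftQ _ _ hker) (quotientToQuotSMulTop_one hx)).trans hφ

lemma exists_rightInverse_quotSMulTopToMap [I.IsMaximal] (hx : x ∈ I) (hx2 : x ∉ I ^ 2) :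
    ∃ s, quotSMulTopToMap I x ∘ₗ s = LinearMap.id := by
  have hsplit := (quotientToQuotSMulTop_exact_quotSMulTopToMap hx).split_tfae'.out 0 1
  exact (hsplit.mpr ⟨quotSMulTopToMap_surjective I x,
    exists_leftInverse_quotientToQuotSMulTop hx hx2⟩).2

lemma projectiveDimension_quotient_map_ne_top [I.IsMaximal] (hx : x ∈ I) (hx2 : x ∉ I ^ 2)
    (hreg : IsSMulRegular R x) (hpd : projectiveDimension (ModuleCat.of R (R ⧸ I)) ≠ ⊤) :
    projectiveDimension (ModuleCat.of (R ⧸ Ideal.span {x})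
      ((R ⧸ Ideal.span {x}) ⧸ I.map (algebraMap R (R ⧸ Ideal.span {x})))) ≠ ⊤ := by
  obtain ⟨n, hn⟩ := (projectiveDimension_ne_top_iff _).mp hpd
  have : HasProjectiveDimensionLE (ModuleCat.of R I) n :=
    (hasProjectiveDimensionLE_quotient_succ_iff I).mp
      (hasProjectiveDimensionLT_of_ge _ (n + 1) _ (by lia))
  have hreg_I : IsSMulRegular I x := hreg.of_injective I.subtype (Submodule.injective_subtype I)
  have := hasProjectiveDimensionLE_quotSMulTop hreg (ModuleCat.of R I) hreg_I (n := n)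
  obtain ⟨s, hs⟩ := exists_rightInverse_quotSMulTopToMap hx hx2
  have hsurj : Function.Surjective (algebraMap R (R ⧸ Ideal.span {x})) :=
    Ideal.Quotient.mk_surjective
  let r : Retract
      (ModuleCat.of (R ⧸ Ideal.span {x}) (I.map (algebraMap R (R ⧸ Ideal.span {x}))))
      (ModuleCat.of (R ⧸ Ideal.span {x}) (QuotSMulTop x I)) :=
    { i := ModuleCat.ofHom (s.extendScalarsOfSurjective hsurj)
      r := ModuleCat.ofHom ((quotSMulTopToMap I x).extendScalarsOfSurjective hsurj)
      retract := ModuleCat.hom_ext (LinearMap.ext fun y ↦ LinearMap.congr_fun hs y) }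
  exact (projectiveDimension_ne_top_iff _).mpr
    ⟨n + 1, (hasProjectiveDimensionLE_quotient_succ_iff _).mpr (r.hasProjectiveDimensionLT _)⟩

end Splitting

section Serre

lemma ringKrullDim_quotient_span_singleton_lt {R : Type u} [CommRing R] [FiniteRingKrullDim R]
    {x : R} (hx : x ∈ nonZeroDivisors R) : ringKrullDim (R ⧸ Ideal.span {x}) < ringKrullDim R := by
  have hle := ringKrullDim_quotient_succ_le_of_nonZeroDivisor hx
  obtain ⟨d, hd⟩ := WithBot.ne_bot_iff_exists.mp (ringKrullDim_ne_bot (R := R))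
  have hd_top : d ≠ ⊤ := by
    rintro rfl
    exact ringKrullDim_ne_top hd.symm
  lift d to ℕ using hd_top
  rw [← hd] at hle ⊢
  exact ENat.WithBot.add_one_le_natCast_iff.mp hle

lemma isGeneratedByRegularSequence_maximalIdeal {R : Type u} [CommRing R] [IsNoetherianRing R]
    [IsLocalRing R] (hpd : projectiveDimension (ModuleCat.of R (R ⧸ maximalIdeal R)) ≠ ⊤) :
    IsGeneratedByRegularSequence (maximalIdeal R) := by
  induction hd : ringKrullDim R using WellFoundedLT.induction generalizing R with
  | ind d ih =>
    by_cases hm : maximalIdeal R = ⊥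
    · exact ⟨[], .nil R R, by rw [hm, Ideal.ofList_nil]⟩
    obtain ⟨x, hx, hx2, hreg⟩ :=
      exists_isSMulRegular_notMem_sq hm (not_isAssociatedPrime_maximalIdeal hm hpd)
    have : Nontrivial (R ⧸ Ideal.span {x}) :=
      Ideal.Quotient.nontrivial_iff.mpr (Ideal.span_singleton_ne_top hx)
    have : IsLocalRing (R ⧸ Ideal.span {x}) := .of_surjective' _ Ideal.Quotient.mk_surjective
    have hmap : (maximalIdeal R).map (algebraMap R (R ⧸ Ideal.span {x})) =
        maximalIdeal (R ⧸ Ideal.span {x}) :=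
      map_maximalIdeal_of_surjective _ Ideal.Quotient.mk_surjective
    have hpd' := projectiveDimension_quotient_map_ne_top hx hx2 hreg hpd
    have hdim : ringKrullDim (R ⧸ Ideal.span {x}) < d :=
      hd ▸ ringKrullDim_quotient_span_singleton_lt
        (isLeftRegular_iff_isRegular.mp hreg).mem_nonZeroDivisors
    refine .of_map_span_singleton hreg hx ?_
    rw [hmap] at hpd' ⊢
    exact ih _ hdim hpd' rfl

theorem projectiveDimension_residueField_ne_top_iff {R : Type u} [CommRing R] [IsNoetherianRing R]
    [IsLocalRing R] : projectiveDimension (ModuleCat.of R (R ⧸ maximalIdeal R)) ≠ ⊤ ↔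
      IsGeneratedByRegularSequence (maximalIdeal R) :=
  ⟨isGeneratedByRegularSequence_maximalIdeal,
    IsGeneratedByRegularSequence.projectiveDimension_quotient_ne_top⟩

end Serre

/-- Serre: Let `R` be a commutative Noetherian local ring with residue
field `k`.  Then `R` is regular (its maximal ideal is generated by a regular sequence)
if and only if `k` has finite projective dimension as an `R`-module (expressed by the
standard characterization: there is `n` with `Ext^i_R(k,M) = 0` for all `M` and `i > n`);
in particular, if `R` is regular then `k` is a perfect complex over `R`, i.e. `k` lies in
the thick subcategory of `D(R)` generated by `R`. -/
theorem regular_iff_residueField_finite_projective_dimension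
    (R : Type u) [CommRing R] [IsNoetherianRing R] [IsLocalRing R]
    [HasExt.{u} (ModuleCat.{u} R)]
    [HasDerivedCategory.{u} (ModuleCat.{u} R)] :
    ((∃ rs : List R, RingTheory.Sequence.IsRegular R rs ∧
        Ideal.span {x : R | x ∈ rs} = IsLocalRing.maximalIdeal R) ↔
      (∃ n : ℕ, ∀ (M : ModuleCat.{u} R) (i : ℕ), n < i →
        Subsingleton (Abelian.Ext
          (ModuleCat.of R (R ⧸ IsLocalRing.maximalIdeal R)) M i))) ∧
    ((∃ rs : List R, RingTheory.Sequence.IsRegular R rs ∧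
        Ideal.span {x : R | x ∈ rs} = IsLocalRing.maximalIdeal R) →
      IsThickBuilt
        ((DerivedCategory.singleFunctor (ModuleCat.{u} R) 0).obj (ModuleCat.of R R))
        ((DerivedCategory.singleFunctor (ModuleCat.{u} R) 0).obj
          (ModuleCat.of R (R ⧸ IsLocalRing.maximalIdeal R)))) := by
  rw [← projectiveDimension_ne_top_iff_exists_subsingleton_ext]
  exact ⟨projectiveDimension_residueField_ne_top_iff.symm,
    IsGeneratedByRegularSequence.isThickBuilt_quotient⟩
end
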